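/- arXiv:2603.17772 — 4 statements merged into one kernel-verified Lean document; each statement's English description precedes it below -/
import Mathlib

section
/- Let n ≥ 2. Every target rule with a default f : S₀ⁿ → A is group strategy-proof. -/
/-- The set of alternatives: the closed interval [0,1]. -/
abbrev A : Type := Set.Icc (0:ℝ) 1

def zeroA : A := ⟨0, by constructor <;> norm_num⟩
def oneA : A := ⟨1, by constructor <;> norm_num⟩

/-- A preference: a complete (total) and transitive binary relation on A. -/
structure Pref : Type where
  rel : A → A → Prop
  total : ∀ a b : A, rel a b ∨ rel b a
  trans : ∀ a b c : A, rel a b → rel b c → rel a c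

/-- Strict part of a preference. -/
def Pref.P (R : Pref) (a b : A) : Prop := R.rel a b ∧ ¬ R.rel b a

/-- `p` is a peak of `R`: `R` is single-peaked with peak `p`. -/
def Pref.IsPeak (R : Pref) (p : A) : Prop :=
  ∀ a b : A, ((p ≤ a ∧ a < b) ∨ (b < a ∧ a ≤ p)) → R.P a b

/-- Single-peaked preferences. -/
def SinglePeaked (R : Pref) : Prop := ∃ p : A, R.IsPeak p

/-- The completely indifferent preference R⁰. -/
def R0 : Pref :=
  ⟨fun _ _ => True, fun _ _ => Or.inl trivial, fun _ _ _ _ _ => trivial⟩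

/-- The augmented domain S₀ = S ∪ {R⁰}. -/
def S0 : Type := {R : Pref // SinglePeaked R ∨ R = R0}

/-- The completely indifferent profile R^{0N}. -/
def indiffProfile (n : ℕ) : Fin n → S0 := fun _ => ⟨R0, Or.inr rfl⟩

open Classical in
/-- The peak of a single-peaked preference (junk value `zeroA` otherwise). -/
noncomputable def peak (R : Pref) : A :=
  if h : SinglePeaked R then h.choose else zeroA

/-- τ̲(R): the smallest peak among non-indifferent agents (as a real number). -/
noncomputable def tmin {n : ℕ} (R : Fin n → S0) : ℝ :=
  sInf {x : ℝ | ∃ i : Fin n, (R i).1 ≠ R0 ∧ ((peak (R i).1 : ℝ) = x)}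

/-- τ̄(R): the largest peak among non-indifferent agents (as a real number). -/
noncomputable def tmax {n : ℕ} (R : Fin n → S0) : ℝ :=
  sSup {x : ℝ | ∃ i : Fin n, (R i).1 ≠ R0 ∧ ((peak (R i).1 : ℝ) = x)}

/-- Onto-ness. -/
def Onto {n : ℕ} (f : (Fin n → S0) → A) : Prop := ∀ a : A, ∃ R : Fin n → S0, f R = a

/-- (Individual) strategy-proofness. -/
def StrategyProof {n : ℕ} (f : (Fin n → S0) → A) : Prop :=
  ∀ (R : Fin n → S0) (i : Fin n) (Ri' : S0),
    (R i).1.rel (f R) (f (Function.update R i Ri'))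

/-- No profitable deviation by the coalition `S`. -/
def CoalitionSP {n : ℕ} (f : (Fin n → S0) → A) (S : Finset (Fin n)) : Prop :=
  ¬ ∃ R R' : Fin n → S0,
      (∀ i ∉ S, R' i = R i) ∧
      (∀ i ∈ S, (R i).1.rel (f R') (f R)) ∧
      (∃ j ∈ S, (R j).1.P (f R') (f R))

/-- Group strategy-proofness. -/
def GroupSP {n : ℕ} (f : (Fin n → S0) → A) : Prop :=
  ∀ S : Finset (Fin n), S.Nonempty → CoalitionSP f S

/-- Pairwise strategy-proofness. -/
def PairwiseSP {n : ℕ} (f : (Fin n → S0) → A) : Prop :=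
  ∀ S : Finset (Fin n), S.Nonempty → S.card ≤ 2 → CoalitionSP f S

/-- No deviation making every member of `S` strictly better off. -/
def WeakCoalitionSP {n : ℕ} (f : (Fin n → S0) → A) (S : Finset (Fin n)) : Prop :=
  ¬ ∃ R R' : Fin n → S0,
      (∀ i ∉ S, R' i = R i) ∧
      (∀ i ∈ S, (R i).1.P (f R') (f R))

/-- Weak group strategy-proofness. -/
def WeakGroupSP {n : ℕ} (f : (Fin n → S0) → A) : Prop :=
  ∀ S : Finset (Fin n), S.Nonempty → WeakCoalitionSP f S

/-- `a` is efficient at the profile `R`. -/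
def EfficientAt {n : ℕ} (R : Fin n → S0) (a : A) : Prop :=
  ¬ ∃ b : A, b ≠ a ∧ (∀ i : Fin n, (R i).1.rel b a) ∧ (∃ j : Fin n, (R j).1.P b a)

/-- Efficiency of a social choice function. -/
def Efficient {n : ℕ} (f : (Fin n → S0) → A) : Prop := ∀ R : Fin n → S0, EfficientAt R (f R)

/-- The tops-only property. -/
def TopsOnly {n : ℕ} (f : (Fin n → S0) → A) : Prop :=
  ∀ R R' : Fin n → S0,
    (∀ i : Fin n, (R i).1 = R0 ↔ (R' i).1 = R0) →
    (∀ i : Fin n, (R i).1 ≠ R0 → peak (R i).1 = peak (R' i).1) →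
    f R = f R'

/-- Target rules with a default. -/
def IsTargetRule {n : ℕ} (f : (Fin n → S0) → A) : Prop :=
  ∃ x y : A, f (indiffProfile n) = y ∧
    ∀ R : Fin n → S0, R ≠ indiffProfile n →
      ((tmin R ≤ (x : ℝ) ∧ (x : ℝ) ≤ tmax R) → f R = x) ∧
      ((x : ℝ) < tmin R → (f R : ℝ) = tmin R) ∧
      (tmax R < (x : ℝ) → (f R : ℝ) = tmax R)

/-!
Write `[a, b]` for the segment between two points taken in either order. A target rule with target
`x` projects `x` onto the convex hull of the peaks, so its value `c` satisfies `c ∈ [p, x]` for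
every peak `p`, and for every `z` some peak `p` has `c ∈ [p, z]`.

Suppose a coalition moves the outcome from `c` to `c' ≠ c`. Some peak `p` has `c ∈ [p, c']`; its
owner strictly loses, hence is not in the coalition, and `p` is still a peak after the deviation, so
`c' ∈ [p, x]`. Thus `p`, `c`, `c'`, `x` are in this order along a line, and since `c ∈ [q, x]` for
every peak `q`, the move from `c` to `c'` leads away from `q`: every non-indifferent agent loses.
-/

theorem mem_uIcc_trans_left_right {α : Type*} [DistribLattice α] {a b c d : α}
    (hc : c ∈ Set.uIcc a d) (hb : b ∈ Set.uIcc a c) : c ∈ Set.uIcc b d := by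
  constructor
  · calc b ⊓ d ≤ (c ⊔ a) ⊓ (c ⊔ d) := inf_le_inf (hb.2.trans_eq (sup_comm a c)) le_sup_right
      _ = c ⊔ a ⊓ d := (sup_inf_left ..).symm
      _ = c := sup_eq_left.2 hc.1
  · calc c = c ⊓ (a ⊔ d) := (inf_eq_left.2 hc.2).symm
      _ = c ⊓ a ⊔ c ⊓ d := inf_sup_left ..
      _ ≤ b ⊔ d := sup_le_sup ((inf_comm c a).trans_le hb.1) inf_le_right

theorem sup_inf_mem_uIcc {α : Type*} [Lattice α] {lo hi p : α} (x : α)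
    (hp : p ∈ Set.Icc lo hi) : lo ⊔ hi ⊓ x ∈ Set.uIcc p x :=
  ⟨(inf_le_inf_right x hp.2).trans le_sup_right,
    sup_le (hp.1.trans le_sup_left) (inf_le_right.trans le_sup_right)⟩

theorem Pref.P.ne_R0 {Q : Pref} {a b : A} (h : Q.P a b) : Q ≠ R0 := by
  rintro rfl
  exact h.2 trivial

theorem Pref.P.ne {Q : Pref} {a b : A} (h : Q.P a b) : a ≠ b := by
  rintro rfl
  exact h.2 h.1

theorem SinglePeaked.isPeak_peak {Q : Pref} (h : SinglePeaked Q) : Q.IsPeak (peak Q) := by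
  rw [peak, dif_pos h]
  exact h.choose_spec

theorem Pref.IsPeak.P_of_mem_uIcc {Q : Pref} {p a b : A} (hp : Q.IsPeak p)
    (ha : (a : ℝ) ∈ Set.uIcc (p : ℝ) b) (hab : a ≠ b) : Q.P a b := by
  rcases Set.mem_uIcc.1 ha with ⟨hpa, hab_le⟩ | ⟨hba_le, hap⟩
  · exact hp a b (.inl ⟨hpa, lt_of_le_of_ne hab_le hab⟩)
  · exact hp a b (.inr ⟨lt_of_le_of_ne hba_le hab.symm, hap⟩)

theorem S0.P_of_mem_uIcc_peak {Q : S0} {a b : A} (hQ : Q.1 ≠ R0)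
    (ha : (a : ℝ) ∈ Set.uIcc (peak Q.1 : ℝ) b) (hab : a ≠ b) : Q.1.P a b :=
  (Q.2.resolve_right hQ).isPeak_peak.P_of_mem_uIcc ha hab

section TargetRules

variable {n : ℕ} {R : Fin n → S0} {f : (Fin n → S0) → A} {x : ℝ}

/-- The set `τ(R)` of peaks of the non-indifferent agents, as real numbers; `tmin R` and `tmax R`
are by definition its infimum and supremum. -/
def peaks (R : Fin n → S0) : Set ℝ :=
  {x : ℝ | ∃ i : Fin n, (R i).1 ≠ R0 ∧ (peak (R i).1 : ℝ) = x}

theorem finite_peaks (R : Fin n → S0) : (peaks R).Finite :=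
  (Set.finite_range fun i => (peak (R i).1 : ℝ)).subset fun _ ⟨i, _, hi⟩ => ⟨i, hi⟩

theorem isLeast_tmin (h : (peaks R).Nonempty) : IsLeast (peaks R) (tmin R) :=
  ⟨h.csInf_mem (finite_peaks R), fun _ => csInf_le (finite_peaks R).bddBelow⟩

theorem isGreatest_tmax (h : (peaks R).Nonempty) : IsGreatest (peaks R) (tmax R) :=
  ⟨h.csSup_mem (finite_peaks R), fun _ => le_csSup (finite_peaks R).bddAbove⟩

theorem tmin_le_tmax (h : (peaks R).Nonempty) : tmin R ≤ tmax R :=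
  (isLeast_tmin h).2 (isGreatest_tmax h).1

theorem ne_indiffProfile_of_nonempty_peaks (h : (peaks R).Nonempty) : R ≠ indiffProfile n := by
  rintro rfl
  obtain ⟨_, i, hi, -⟩ := h
  exact hi rfl

/-- `f` selects the projection of the target `x` onto the convex hull of the peaks, expressed by
betweenness alone so that no direction on the line is singled out. The value of `f` at the
completely indifferent profile is unconstrained. -/
structure HasTarget (f : (Fin n → S0) → A) (x : ℝ) : Prop where
  mem_uIcc : ∀ R, ∀ p ∈ peaks R, (f R : ℝ) ∈ Set.uIcc p x
  exists_mem_uIcc : ∀ R, (peaks R).Nonempty → ∀ z : ℝ, ∃ p ∈ peaks R, (f R : ℝ) ∈ Set.uIcc p z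

theorem IsTargetRule.exists_eq_sup_inf (hf : IsTargetRule f) :
    ∃ x : ℝ, ∀ R, (peaks R).Nonempty → (f R : ℝ) = tmin R ⊔ tmax R ⊓ x := by
  obtain ⟨x, -, -, hx⟩ := hf
  refine ⟨x, fun R hR => ?_⟩
  obtain ⟨h_mid, h_lo, h_hi⟩ := hx R (ne_indiffProfile_of_nonempty_peaks hR)
  rcases lt_or_ge (x : ℝ) (tmin R) with hlo | hlo
  · rw [h_lo hlo, inf_eq_right.2 (hlo.le.trans (tmin_le_tmax hR)), sup_eq_left.2 hlo.le]
  rcases lt_or_ge (tmax R) (x : ℝ) with hhi | hhi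
  · rw [h_hi hhi, inf_eq_left.2 hhi.le, sup_eq_right.2 (tmin_le_tmax hR)]
  · rw [h_mid ⟨hlo, hhi⟩, inf_eq_right.2 hhi, sup_eq_right.2 hlo]

theorem hasTarget_of_eq_sup_inf
    (hf : ∀ R, (peaks R).Nonempty → (f R : ℝ) = tmin R ⊔ tmax R ⊓ x) : HasTarget f x where
  mem_uIcc R p hp := by
    have hR : (peaks R).Nonempty := ⟨p, hp⟩
    rw [hf R hR]
    exact sup_inf_mem_uIcc x ⟨(isLeast_tmin hR).2 hp, (isGreatest_tmax hR).2 hp⟩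
  exists_mem_uIcc R hR z := by
    have h_hull : (f R : ℝ) ∈ Set.Icc (tmin R) (tmax R) := by
      rw [hf R hR]
      exact ⟨le_sup_left, sup_le (tmin_le_tmax hR) inf_le_left⟩
    rcases Set.uIcc_subset_uIcc_union_uIcc (b := z) (Set.Icc_subset_uIcc h_hull) with h | h
    · exact ⟨tmin R, (isLeast_tmin hR).1, h⟩
    · exact ⟨tmax R, (isGreatest_tmax hR).1, Set.uIcc_comm z _ ▸ h⟩

theorem HasTarget.groupSP (hf : HasTarget f x) : GroupSP f := by
  rintro S - ⟨R, R', h_out, h_in, j, -, hjP⟩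
  have hj : (R j).1 ≠ R0 := hjP.ne_R0
  have h_ne : f R ≠ f R' := hjP.ne.symm
  obtain ⟨_, ⟨i, hi, rfl⟩, h_loss⟩ := hf.exists_mem_uIcc R ⟨_, j, hj, rfl⟩ (f R')
  have hiS : i ∉ S := fun hiS => (S0.P_of_mem_uIcc_peak hi h_loss h_ne).2 (h_in i hiS)
  have h_peak : (peak (R i).1 : ℝ) ∈ peaks R' := by
    rw [← h_out i hiS] at hi ⊢
    exact ⟨i, hi, rfl⟩
  have h_toward_target : (f R' : ℝ) ∈ Set.uIcc (f R : ℝ) x :=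
    mem_uIcc_trans_left_right (hf.mem_uIcc R' _ h_peak) h_loss
  have h_away : (f R : ℝ) ∈ Set.uIcc (peak (R j).1 : ℝ) (f R') := by
    have h_target := hf.mem_uIcc R _ ⟨j, hj, rfl⟩
    rw [Set.uIcc_comm] at h_target h_toward_target ⊢
    exact mem_uIcc_trans_left_right h_target h_toward_target
  exact (S0.P_of_mem_uIcc_peak hj h_away h_ne).2 hjP.1

end TargetRules

/-- For n ≥ 2, every target rule with a default is group
strategy-proof. -/
theorem stmt_2 (n : ℕ) (hn : 2 ≤ n) (f : (Fin n → S0) → A)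
    (hT : IsTargetRule f) : GroupSP f := by
  obtain ⟨x, hx⟩ := hT.exists_eq_sup_inf
  exact (hasTarget_of_eq_sup_inf hx).groupSP
end

section
/- Let n ≥ 2. If a social choice function f : S₀ⁿ → A is efficient and strategy-proof, then f is weakly group strategy-proof. -/
/-! If a coalition gains by moving the outcome up, all its members have peaks above the outcome, so
it suffices that an agent whose peak lies above the outcome can never raise it. If she could, then
because the outcomes available to her leave a gap `(a, c)` around her peak, two reports with that
same peak would give her `a` and `c` respectively. Efficiency at the outcome `a` provides an agent
with a peak at or below `a`. Moving that agent's peak into the gap gives another such pair of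
reports, for one of the two agents, with fewer peaks at or below `a`; this descent is impossible.
Reflecting the interval turns upward deviations into downward ones. -/

open Set Function Filter Topology

variable {n : ℕ} {f : (Fin n → S0) → A}

namespace Pref

variable {R : Pref} {p q a c x y : A} {I : Set A}

lemma IsPeak.le_of_rel_of_le (hp : R.IsPeak p) (hy : p ≤ y) (h : R.rel x y) : x ≤ y :=
  not_lt.1 fun hlt => (hp y x (.inl ⟨hy, hlt⟩)).2 h

lemma IsPeak.le_of_rel_of_ge (hp : R.IsPeak p) (hy : y ≤ p) (h : R.rel x y) : y ≤ x :=
  not_lt.1 fun hlt => (hp y x (.inr ⟨hlt, hy⟩)).2 h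

lemma IsPeak.unique (hp : R.IsPeak p) (hq : R.IsPeak q) : p = q := by
  by_contra hne
  rcases lt_or_gt_of_ne hne with h | h
  · exact h.not_ge (hp.le_of_rel_of_le le_rfl (hq q p (.inr ⟨h, le_rfl⟩)).1)
  · exact h.not_ge (hp.le_of_rel_of_ge le_rfl (hq q p (.inl ⟨le_rfl, h⟩)).1)

/-- The preference that ranks every alternative of `I` strictly above every alternative outside
`I`, and otherwise agrees with `R`. It lets one prescribe upper contour sets of a single-peaked
preference without moving its peak. -/
def promote (R : Pref) (I : Set A) : Pref where
  rel x y := (y ∈ I → x ∈ I) ∧ ((x ∈ I → y ∈ I) → R.rel x y)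
  total x y := by
    have := R.total x y
    tauto
  trans x y z := by
    have := R.trans x y z
    tauto

lemma mem_of_promote_rel (h : (R.promote I).rel x y) (hy : y ∈ I) : x ∈ I := h.1 hy

lemma rel_of_promote_rel (h : (R.promote I).rel x y) (hy : y ∈ I) : R.rel x y := h.2 fun _ => hy

lemma mem_or_rel_of_promote_rel (h : (R.promote I).rel x y) : x ∈ I ∨ R.rel x y :=
  or_iff_not_imp_left.2 fun hx => h.2 fun hx' => absurd hx' hx

lemma IsPeak.promote (hp : R.IsPeak p) (hI : I.OrdConnected) (hpI : p ∈ I) :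
    (R.promote I).IsPeak p := by
  intro x y hxy
  have hmem : y ∈ I → x ∈ I := fun hy => by
    rcases hxy with ⟨hpx, hxy⟩ | ⟨hyx, hxp⟩
    · exact hI.out hpI hy ⟨hpx, hxy.le⟩
    · exact hI.out hy hpI ⟨hyx.le, hxp⟩
  have hP : R.P x y := hp x y hxy
  exact ⟨⟨hmem, fun _ => hP.1⟩, fun h => hP.2 (h.2 hmem)⟩

/-- A modification of `R` ranking `(a, c)` first, then `c`, then everything else. -/
def favorRight (R : Pref) (a c : A) : Pref := (R.promote (Ioc a c)).promote (Ioo a c)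

/-- A modification of `R` ranking `[a, c)` first, then `c`, then everything else. -/
def favorLeft (R : Pref) (a c : A) : Pref := (R.promote (Icc a c)).promote (Ico a c)

lemma IsPeak.favorRight (hp : R.IsPeak p) (hap : a < p) (hpc : p < c) :
    (R.favorRight a c).IsPeak p :=
  (hp.promote ordConnected_Ioc ⟨hap, hpc.le⟩).promote ordConnected_Ioo ⟨hap, hpc⟩

lemma IsPeak.favorLeft (hp : R.IsPeak p) (hap : a < p) (hpc : p < c) :
    (R.favorLeft a c).IsPeak p :=
  (hp.promote ordConnected_Icc ⟨hap.le, hpc.le⟩).promote ordConnected_Ico ⟨hap.le, hpc⟩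

lemma mem_Ioc_of_favorRight_rel (hac : a < c) (h : (R.favorRight a c).rel x c) : x ∈ Ioc a c :=
  (mem_or_rel_of_promote_rel h).elim (fun hx => Ioo_subset_Ioc_self hx)
    fun hx => mem_of_promote_rel hx (right_mem_Ioc.2 hac)

lemma notMem_Ioo_of_favorRight_rel (h : (R.favorRight a c).rel c x) : x ∉ Ioo a c :=
  fun hx => (mem_of_promote_rel h hx).2.false

lemma mem_Icc_of_favorLeft_rel (hac : a < c) (h : (R.favorLeft a c).rel x c) : x ∈ Icc a c :=
  (mem_or_rel_of_promote_rel h).elim (fun hx => Ico_subset_Icc_self hx)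
    fun hx => mem_of_promote_rel hx (right_mem_Icc.2 hac.le)

lemma mem_Ico_of_favorLeft_rel (hac : a < c) (h : (R.favorLeft a c).rel x a) : x ∈ Ico a c :=
  mem_of_promote_rel h (left_mem_Ico.2 hac)

end Pref

namespace StrategyProof

lemma rel_update_update (hSP : StrategyProof f) (T : Fin n → S0) (i : Fin n) (X Y : S0) :
    X.1.rel (f (update T i X)) (f (update T i Y)) := by
  simpa only [update_self, update_idem] using hSP (update T i X) i Y

lemma rel_update (hSP : StrategyProof f) (T : Fin n → S0) (i : Fin n) (X : S0) :
    X.1.rel (f (update T i X)) (f T) := by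
  simpa only [update_eq_self] using hSP.rel_update_update T i X (T i)

end StrategyProof

/-- The agents with a peak at or below `a`. Indifferent agents are not among them. -/
def lowAgents (T : Fin n → S0) (a : A) : Set (Fin n) := {k | ∃ q ≤ a, (T k).1.IsPeak q}

section Pivot

variable {R : Pref} {U V X : S0} {T : Fin n → S0} {i j : Fin n} {p a c : A}

lemma notMem_lowAgents_of_isPeak (hp : (T i).1.IsPeak p) (hap : a < p) : i ∉ lowAgents T a :=
  fun ⟨_, hqa, hq⟩ => (hap.trans_eq (hp.unique hq)).not_ge hqa

lemma mem_lowAgents_update_of_ne (hij : i ≠ j) :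
    i ∈ lowAgents (update T j X) a ↔ i ∈ lowAgents T a := by
  simp only [lowAgents, mem_ofPred_eq, update_of_ne hij]

lemma lowAgents_update_ssubset (hX : X.1.IsPeak p) (hap : a < p) (hj : j ∈ lowAgents T a) :
    lowAgents (update T j X) a ⊂ lowAgents T a := by
  have hj' : j ∉ lowAgents (update T j X) a :=
    notMem_lowAgents_of_isPeak (by rwa [update_self]) hap
  exact ssubset_of_subset_of_ne
    (fun k hk => (mem_lowAgents_update_of_ne (ne_of_mem_of_not_mem hk hj')).1 hk)
    fun h => hj' (h ▸ hj)

/-- Otherwise everyone would accept, and `i` would welcome, a slight increase of the outcome. -/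
lemma EfficientAt.lowAgents_nonempty (h : EfficientAt T a) (hp : (T i).1.IsPeak p) (hap : a < p) :
    (lowAgents T a).Nonempty := by
  by_contra hlow
  have weak (k : Fin n) : ∀ᶠ b in 𝓝[>] a, (T k).1.rel b a := by
    rcases (T k).2 with ⟨q, hq⟩ | h0
    · have haq : a < q := not_le.1 fun hqa => hlow ⟨k, q, hqa, hq⟩
      filter_upwards [Ioc_mem_nhdsGT haq] with b hb using (hq b a (.inr hb)).1
    · simp only [h0, R0, eventually_true]
  have : (𝓝[>] a).NeBot := nhdsGT_neBot_of_exists_gt ⟨p, hap⟩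
  obtain ⟨b, hweak, hb⟩ := ((eventually_all.2 weak).and (Ioc_mem_nhdsGT hap)).exists
  exact h ⟨b, hb.1.ne', hweak, i, hp b a (.inr hb)⟩

namespace StrategyProof

lemma apply_update_favorRight_of_mem_lowAgents (hSP : StrategyProof f)
    (hU : U.1 = R.favorRight a c) (hac : a < c) (hj : j ∈ lowAgents T a) (hT : f T = c) :
    f (update T j U) = c := by
  obtain ⟨q, hqa, hq⟩ := hj
  have hmem : f (update T j U) ∈ Ioc a c :=
    Pref.mem_Ioc_of_favorRight_rel hac (by simpa only [hU, hT] using hSP.rel_update T j U)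
  have hrel : (T j).1.rel c (f (update T j U)) := hT ▸ hSP T j U
  exact hmem.2.antisymm (hq.le_of_rel_of_le (hqa.trans hmem.1.le) hrel)

lemma eq_or_eq_of_apply_update_favorRight (hSP : StrategyProof f)
    (hU : U.1 = R.favorRight a c) (hV : V.1 = R.favorLeft a c) (hac : a < c)
    (hTi : T i = V) (hT : f (update T i U) = c) : f T = a ∨ f T = c := by
  have hmem : f T ∈ Icc a c :=
    Pref.mem_Icc_of_favorLeft_rel hac (by simpa only [hTi, hV, hT] using hSP T i U)
  have hgap : f T ∉ Ioo a c :=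
    Pref.notMem_Ioo_of_favorRight_rel (by simpa only [hU, hT] using hSP.rel_update T i U)
  grind

lemma apply_update_favorLeft (hSP : StrategyProof f)
    (hU : U.1 = R.favorRight a c) (hV : V.1 = R.favorLeft a c) (hac : a < c)
    (hT : f T = a) (hTU : f (update T j U) = c) : f (update T j V) = a := by
  have hmem : f (update T j V) ∈ Ico a c :=
    Pref.mem_Ico_of_favorLeft_rel hac (by simpa only [hV, hT] using hSP.rel_update T j V)
  have hgap : f (update T j V) ∉ Ioo a c := Pref.notMem_Ioo_of_favorRight_rel
    (by simpa only [hU, hTU] using hSP.rel_update_update T j U V)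
  grind

lemma apply_update_favorRight_ne (hSP : StrategyProof f) (hEff : Efficient f) (hp : R.IsPeak p)
    (hap : a < p) (hpc : p < c) (hU : U.1 = R.favorRight a c) (hV : V.1 = R.favorLeft a c)
    (hTi : T i = V) (hT : f T = a) : f (update T i U) ≠ c := by
  have hUp : U.1.IsPeak p := hU ▸ hp.favorRight hap hpc
  have hVp : V.1.IsPeak p := hV ▸ hp.favorLeft hap hpc
  have hac : a < c := hap.trans hpc
  induction hL : lowAgents T a using WellFoundedLT.induction generalizing T i with
  | ind L ih =>
  subst hL
  intro hTU
  have hTp : (T i).1.IsPeak p := hTi ▸ hVp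
  obtain ⟨j, hj⟩ := (hT ▸ hEff T).lowAgents_nonempty hTp hap
  have hij : i ≠ j := fun h => notMem_lowAgents_of_isPeak hTp hap (h ▸ hj)
  have hTUU : f (update (update T j U) i U) = c := by
    rw [update_comm hij.symm]
    exact hSP.apply_update_favorRight_of_mem_lowAgents hU hac
      ((mem_lowAgents_update_of_ne hij.symm).2 hj) hTU
  have hTji : update T j U i = V := (update_of_ne hij _ _).trans hTi
  rcases hSP.eq_or_eq_of_apply_update_favorRight hU hV hac hTji hTUU with hTj | hTj
  · exact ih _ (lowAgents_update_ssubset hUp hap hj) hTji hTj rfl hTUU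
  · exact ih _ (lowAgents_update_ssubset hVp hap hj) (update_self j V T)
      (hSP.apply_update_favorLeft hU hV hac hT hTj) rfl (by rwa [update_idem])

end StrategyProof

end Pivot

namespace StrategyProof

variable {R R' : Fin n → S0} {S : Finset (Fin n)}

lemma apply_update_le_of_lt_peak (hSP : StrategyProof f) (hEff : Efficient f) {i : Fin n} {p : A}
    (hp : (R i).1.IsPeak p) (hlt : f R < p) (X : S0) : f (update R i X) ≤ f R := by
  by_contra! hX
  have gap (Y : S0) (hY : f R < f (update R i Y)) : p < f (update R i Y) :=
    not_le.1 fun hle => hY.not_ge (hp.le_of_rel_of_ge hle (hSP R i Y))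
  -- Reporting `W` selects the least outcome above `p` that agent `i` can bring about.
  let W : S0 := ⟨(R i).1.promote (Ici p), .inl ⟨p, hp.promote ordConnected_Ici self_mem_Ici⟩⟩
  have hpW : p < f (update R i W) :=
    gap W <| hlt.trans_le <|
      Pref.mem_of_promote_rel (hSP.rel_update_update R i W X) (gap X hX).le
  have hmin (Y : S0) (hY : f R < f (update R i Y)) : f (update R i W) ≤ f (update R i Y) :=
    hp.le_of_rel_of_le (gap Y hY).le <|
      Pref.rel_of_promote_rel (hSP.rel_update_update R i W Y) (gap Y hY).le
  have hac : f R < f (update R i W) := hlt.trans hpW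
  let U : S0 := ⟨(R i).1.favorRight (f R) (f (update R i W)), .inl ⟨p, hp.favorRight hlt hpW⟩⟩
  let V : S0 := ⟨(R i).1.favorLeft (f R) (f (update R i W)), .inl ⟨p, hp.favorLeft hlt hpW⟩⟩
  have hU : f (update R i U) = f (update R i W) := by
    have hmem := Pref.mem_Ioc_of_favorRight_rel hac (hSP.rel_update_update R i U W)
    exact hmem.2.antisymm (hmin U hmem.1)
  have hV : f (update R i V) = f R := by
    have hmem := Pref.mem_Ico_of_favorLeft_rel hac (hSP.rel_update R i V)
    exact hmem.1.eq_of_not_lt' fun h => (hmin V h).not_gt hmem.2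
  exact hSP.apply_update_favorRight_ne hEff hp hlt hpW (U := U) (V := V) rfl rfl
    (update_self i V R) hV (by rwa [update_idem])

lemma apply_le_of_forall_lt_peak (hSP : StrategyProof f) (hEff : Efficient f)
    (hR' : ∀ i ∉ S, R' i = R i) (hpeak : ∀ i ∈ S, ∃ p, (R i).1.IsPeak p ∧ f R < p) :
    f R' ≤ f R := by
  induction S using Finset.induction_on generalizing R with
  | empty => exact (congrArg f (funext fun i => hR' i (Finset.notMem_empty i))).le
  | insert j S hj ih =>
    obtain ⟨p, hp, hlt⟩ := hpeak j (Finset.mem_insert_self j S)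
    have hle : f (update R j (R' j)) ≤ f R := hSP.apply_update_le_of_lt_peak hEff hp hlt (R' j)
    refine (ih (fun i hi => ?_) fun i hi => ?_).trans hle
    · rcases eq_or_ne i j with rfl | hij
      · rw [update_self]
      · rw [update_of_ne hij, hR' i (Finset.mem_insert.not.2 (not_or.2 ⟨hij, hi⟩))]
    · obtain ⟨q, hq, hltq⟩ := hpeak i (Finset.mem_insert_of_mem hi)
      rw [update_of_ne (ne_of_mem_of_not_mem hi hj)]
      exact ⟨q, hq, hle.trans_lt hltq⟩

lemma apply_le_of_forall_P (hSP : StrategyProof f) (hEff : Efficient f)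
    (hR' : ∀ i ∉ S, R' i = R i) (hP : ∀ i ∈ S, (R i).1.P (f R') (f R)) : f R' ≤ f R := by
  by_contra! hlt
  refine hlt.not_ge (hSP.apply_le_of_forall_lt_peak hEff hR' fun i hi => ?_)
  rcases (R i).2 with ⟨p, hp⟩ | h0
  · exact ⟨p, hp, not_le.1 fun hle => hlt.not_ge (hp.le_of_rel_of_le hle (hP i hi).1)⟩
  · exact absurd (by rw [h0]; trivial) (hP i hi).2

end StrategyProof

open unitInterval

/-- The mirror image of a preference under `x ↦ 1 - x`. -/
def Pref.reflect (R : Pref) : Pref where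
  rel x y := R.rel (σ x) (σ y)
  total x y := R.total (σ x) (σ y)
  trans x y z := R.trans (σ x) (σ y) (σ z)

lemma Pref.IsPeak.reflect {R : Pref} {p : A} (hp : R.IsPeak p) : R.reflect.IsPeak (σ p) := by
  rintro x y (⟨hpx, hxy⟩ | ⟨hyx, hxp⟩)
  · exact hp _ _ (.inr ⟨symm_lt_symm.2 hxy, symm_le_comm.1 hpx⟩)
  · exact hp _ _ (.inl ⟨le_symm_comm.1 hxp, symm_lt_symm.2 hyx⟩)

lemma Pref.reflect_reflect (R : Pref) : R.reflect.reflect = R := by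
  simp only [reflect, symm_symm]

/-- The mirror image of a preference in `S0` under `x ↦ 1 - x`. -/
def S0.reflect (X : S0) : S0 :=
  ⟨X.1.reflect, X.2.imp (fun ⟨p, hp⟩ => ⟨σ p, hp.reflect⟩) fun h0 => by rw [h0]; rfl⟩

lemma S0.reflect_rel {X : S0} {x y : A} : X.reflect.1.rel x y ↔ X.1.rel (σ x) (σ y) := Iff.rfl

lemma S0.reflect_P {X : S0} {x y : A} : X.reflect.1.P x y ↔ X.1.P (σ x) (σ y) := Iff.rfl

lemma S0.reflect_reflect (X : S0) : X.reflect.reflect = X :=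
  Subtype.ext (Pref.reflect_reflect X.1)

/-- The social choice function that mirrors the reports, applies `f`, and mirrors the outcome. -/
def reflectSCF (f : (Fin n → S0) → A) (T : Fin n → S0) : A := σ (f fun i => (T i).reflect)

lemma reflectSCF_reflect (T : Fin n → S0) : reflectSCF f (fun i => (T i).reflect) = σ (f T) := by
  simp only [reflectSCF, S0.reflect_reflect]

lemma Efficient.reflect (hEff : Efficient f) : Efficient (reflectSCF f) := by
  rintro T ⟨b, hb, hweak, i, hstrict⟩
  refine hEff (fun k => (T k).reflect) ⟨σ b, fun h => hb ?_, fun k => ?_, i, ?_⟩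
  · rw [reflectSCF, ← h, symm_symm]
  · simpa only [S0.reflect_rel, reflectSCF, symm_symm] using hweak k
  · simpa only [S0.reflect_P, reflectSCF, symm_symm] using hstrict

lemma StrategyProof.reflect (hSP : StrategyProof f) : StrategyProof (reflectSCF f) := by
  intro T i X
  have hupdate : (fun k => (update T i X k).reflect) =
      update (fun k => (T k).reflect) i X.reflect :=
    funext (apply_update (fun _ => S0.reflect) T i X)
  simpa only [S0.reflect_rel, reflectSCF, hupdate] using hSP (fun k => (T k).reflect) i X.reflect

lemma StrategyProof.le_apply_of_forall_P (hSP : StrategyProof f) (hEff : Efficient f)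
    {R R' : Fin n → S0} {S : Finset (Fin n)} (hR' : ∀ i ∉ S, R' i = R i)
    (hP : ∀ i ∈ S, (R i).1.P (f R') (f R)) : f R ≤ f R' := by
  have h := hSP.reflect.apply_le_of_forall_P hEff.reflect (S := S)
    (R := fun i => (R i).reflect) (R' := fun i => (R' i).reflect)
    (fun i hi => congrArg S0.reflect (hR' i hi)) fun i hi => by
      simpa only [S0.reflect_P, reflectSCF_reflect, symm_symm] using hP i hi
  rwa [reflectSCF_reflect, reflectSCF_reflect, symm_le_symm] at h

/-- For n ≥ 2, every efficient and strategy-proof SCF is weakly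
group strategy-proof. -/
theorem stmt_4 (n : ℕ) (hn : 2 ≤ n) (f : (Fin n → S0) → A)
    (hEff : Efficient f) (hSP : StrategyProof f) : WeakGroupSP f := by
  rintro S ⟨i, hi⟩ ⟨R, R', hR', hP⟩
  have heq : f R' = f R :=
    le_antisymm (hSP.apply_le_of_forall_P hEff hR' hP) (hSP.le_apply_of_forall_P hEff hR' hP)
  have hPi : (R i).1.P (f R') (f R) := hP i hi
  rw [heq] at hPi
  exact hPi.2 hPi.1
end

section
/- Let n ≥ 3. If a social choice function f : S₀ⁿ → A is onto and pairwise strategy-proof, then f is efficient; in particular, for every profile R ≠ R^{0N}, f(R) ∈ [τ̲(R), τ̄(R)]. -/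
/-!
Suppose `b` Pareto dominates `f R`. By single-peakedness every non-indifferent agent strictly
prefers every alternative strictly between `f R` and `b` to `f R`. Fix such an alternative `t` and
a single-peaked `Q` with peak `t` for which only the alternatives between `f R` and `t` are as good
as `f R`. Letting all non-indifferent agents switch to `Q` shrinks their upper contour sets at
`f R`, so strategy-proofness keeps the outcome at `f R`. On the other hand, ontoness and
strategy-proofness give outcome `t` when everybody reports `Q`, and pairwise strategy-proofness
lets agents turn indifferent without disturbing it: otherwise an indifferent agent could pair up
with one whose preference is still `Q`, and report `Q` to restore the latter's favourite.
-/

theorem update_induction {ι : Type*} [Finite ι] [DecidableEq ι] {β : ι → Type*}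
    {p : (∀ i, β i) → Prop} {u v : ∀ i, β i} (start : p u)
    (step : ∀ w i, w i = u i → p w → p (Function.update w i (v i))) : p v := by
  have := Fintype.ofFinite ι
  suffices h : ∀ s : Finset ι, p (s.piecewise v u) by simpa using h Finset.univ
  intro s
  induction s using Finset.induction_on with
  | empty => simpa using start
  | insert i s hi ih =>
    rw [Finset.piecewise_insert]
    exact step _ i (Finset.piecewise_eq_of_notMem _ _ _ hi) ih

namespace Pref

variable {R : Pref} {p a b x : A}

/-- The preference that ranks alternatives by the value of the utility function `u`. -/
def ofUtility (u : A → ℝ) : Pref where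
  rel a b := u b ≤ u a
  total _ _ := le_total _ _
  trans _ _ _ hab hbc := hbc.trans hab

theorem ofUtility_P_iff {u : A → ℝ} : (ofUtility u).P a b ↔ u b < u a :=
  lt_iff_le_not_ge.symm

theorem P.trans_rel (hab : R.P a b) (hbx : R.rel b x) : R.P a x :=
  ⟨R.trans _ _ _ hab.1 hbx, fun hxa => hab.2 (R.trans _ _ _ hbx hxa)⟩

theorem ne_R0_of_P (h : R.P a b) : R ≠ R0 := by
  rintro rfl
  exact h.2 trivial

theorem IsPeak.eq_of_rel (hp : R.IsPeak p) (hx : R.rel x p) : x = p := by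
  by_contra hne
  rcases lt_or_gt_of_ne hne with hlt | hlt
  · exact (hp p x (Or.inr ⟨hlt, le_rfl⟩)).2 hx
  · exact (hp p x (Or.inl ⟨le_rfl, hlt⟩)).2 hx

theorem IsPeak.P_of_mem_uIoo (hp : R.IsPeak p) (hba : R.rel b a) (hx : x ∈ Set.uIoo a b) :
    R.P x a := by
  rcases le_total a b with hab | hab
  · rw [Set.uIoo_of_le hab] at hx
    rcases le_total x p with hxp | hpx
    · exact hp x a (Or.inr ⟨hx.1, hxp⟩)
    · exact (hp x b (Or.inl ⟨hpx, hx.2⟩)).trans_rel hba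
  · rw [Set.uIoo_of_ge hab] at hx
    rcases le_total p x with hpx | hxp
    · exact hp x a (Or.inl ⟨hpx, hx.2⟩)
    · exact (hp x b (Or.inr ⟨hx.1, hxp⟩)).trans_rel hba

end Pref

theorem isPeak_peak {R : S0} (hR : R.1 ≠ R0) : R.1.IsPeak (peak R.1) := by
  have hsp : SinglePeaked R.1 := R.2.resolve_right hR
  rw [peak, dif_pos hsp]
  exact hsp.choose_spec

theorem exists_isPeak_forall_rel_mem_uIcc (t a : A) :
    ∃ Q : S0, Q.1.IsPeak t ∧ ∀ x, Q.1.rel x a → x ∈ Set.uIcc t a := by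
  classical
  -- The penalty exceeds the diameter of `A`, so it pushes every point outside `[t, a]` below `a`.
  let u : A → ℝ := fun x => -dist x t - if x ∈ Set.uIcc t a then 0 else 2
  have dist_le_one (x : A) : dist x t ≤ 1 := Real.dist_le_of_mem_Icc_01 x.2 t.2
  have isPeak_u : (Pref.ofUtility u).IsPeak t := by
    intro x y hxy
    have hdist : dist x t < dist y t := by
      simp only [Subtype.dist_eq, Real.dist_eq, ← Subtype.coe_le_coe, ← Subtype.coe_lt_coe] at hxy ⊢
      grind
    have hx_uIcc : x ∈ Set.uIcc t y := Set.mem_uIcc.2 <|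
      hxy.imp (fun h => ⟨h.1, h.2.le⟩) (fun h => ⟨h.1.le, h.2⟩)
    have hmem : y ∈ Set.uIcc t a → x ∈ Set.uIcc t a := fun hy =>
      Set.uIcc_subset_uIcc_left hy hx_uIcc
    rw [Pref.ofUtility_P_iff]
    grind
  refine ⟨⟨Pref.ofUtility u, Or.inl ⟨t, isPeak_u⟩⟩, isPeak_u, fun x hxa => ?_⟩
  have hua : u a ≤ u x := hxa
  by_contra hx
  simp only [u, Set.right_mem_uIcc, if_true, if_neg hx] at hua
  linarith [dist_le_one a, dist_nonneg (x := x) (y := t)]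

section SocialChoice

variable {n : ℕ} {f : (Fin n → S0) → A} {R R' : Fin n → S0} {Q : S0} {t : A}

/-- Maskin monotonicity. -/
theorem StrategyProof.apply_eq_of_upperContour_subset (h : StrategyProof f)
    (hR' : ∀ i, R' i = R i ∨
      ∀ x, (R' i).1.rel x (f R) → x = f R ∨ (R i).1.P x (f R)) :
    f R' = f R := by
  refine update_induction (p := fun V => f V = f R) rfl fun V i hVi hV => ?_
  rcases hR' i with hi | hi
  · rw [hi, ← hVi, Function.update_eq_self, hV]
  have new_rel : (R' i).1.rel (f (Function.update V i (R' i))) (f R) := by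
    simpa [hV] using h (Function.update V i (R' i)) i (V i)
  have old_rel : (R i).1.rel (f R) (f (Function.update V i (R' i))) := by
    simpa only [hV, hVi] using h V i (R' i)
  exact (hi _ new_rel).resolve_right fun hP => hP.2 old_rel

theorem StrategyProof.apply_const_eq_of_isPeak (h : StrategyProof f) (hOnto : Onto f)
    (hQ : Q.1.IsPeak t) : f (fun _ => Q) = t := by
  obtain ⟨R, rfl⟩ := hOnto t
  exact h.apply_eq_of_upperContour_subset fun _ => Or.inr fun _ hx => Or.inl (hQ.eq_of_rel hx)

theorem PairwiseSP.rel_update_of_rel (h : PairwiseSP f) {i : Fin n}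
    (hi : (R i).1.rel (f (Function.update R i Q)) (f R)) (j : Fin n) :
    (R j).1.rel (f R) (f (Function.update R i Q)) := by
  by_contra hj
  have hji := ((R j).1.total _ _).resolve_left hj
  refine h {i, j} (by simp) Finset.card_le_two
    ⟨R, Function.update R i Q, fun k hk => ?_, fun k hk => ?_, j, by simp, hji, hj⟩
  · exact Function.update_of_ne (fun hki => hk (by simp [hki])) _ _
  · rcases Finset.mem_insert.1 hk with rfl | hk
    · exact hi
    · rwa [Finset.mem_singleton.1 hk]

theorem PairwiseSP.strategyProof (h : PairwiseSP f) : StrategyProof f := fun R i _ =>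
  ((R i).1.total _ _).elim id fun hi => h.rel_update_of_rel hi i

theorem PairwiseSP.apply_eq_of_isPeak_of_forall_eq_or_eq_R0 (h : PairwiseSP f) (hOnto : Onto f)
    (hQ : Q.1.IsPeak t) (hR : ∀ i, R i = Q ∨ (R i).1 = R0) {j : Fin n} (hj : R j = Q) :
    f R = t := by
  refine (update_induction (p := fun V => V j = Q ∧ f V = t)
    ⟨rfl, h.strategyProof.apply_const_eq_of_isPeak hOnto hQ⟩ ?_).2
  rintro V i hVi ⟨hVj, hV⟩
  rcases hR i with hi | hi
  · rw [show R i = V i from hi.trans hVi.symm, Function.update_eq_self]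
    exact ⟨hVj, hV⟩
  have hVj' : Function.update V i (R i) j = Q := by grind [Function.update_apply]
  have revert_rel : Q.1.rel (f (Function.update V i (R i))) t := by
    have := h.rel_update_of_rel (R := Function.update V i (R i)) (Q := V i) (i := i)
      (by simp [hi, R0]) j
    simpa [hVj', hV] using this
  exact ⟨hVj', hQ.eq_of_rel revert_rel⟩

theorem PairwiseSP.efficient (h : PairwiseSP f) (hOnto : Onto f) : Efficient f := by
  classical
  rintro R ⟨b, hb, hba, j, hj⟩
  obtain ⟨t, ht⟩ := Set.nonempty_uIoo.2 hb.symm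
  obtain ⟨Q, hQ, hQ_uIcc⟩ := exists_isPeak_forall_rel_mem_uIcc t (f R)
  let R' : Fin n → S0 := fun i => if (R i).1 = R0 then R i else Q
  have outcome_unchanged : f R' = f R := by
    refine h.strategyProof.apply_eq_of_upperContour_subset fun i => ?_
    by_cases hi : (R i).1 = R0
    · exact Or.inl (if_pos hi)
    refine Or.inr fun x hx => or_iff_not_imp_left.2 fun hxa => ?_
    have hx_uIcc : x ∈ Set.uIcc t (f R) := hQ_uIcc x (by simpa [R', hi] using hx)
    have hx_uIoo : x ∈ Set.uIoo (f R) b := by grind [Set.uIoo, Set.uIcc]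
    exact (isPeak_peak hi).P_of_mem_uIoo (hba i) hx_uIoo
  have outcome_eq_peak : f R' = t := by
    refine h.apply_eq_of_isPeak_of_forall_eq_or_eq_R0 hOnto hQ (fun i => ?_)
      (if_neg (Pref.ne_R0_of_P hj))
    by_cases hi : (R i).1 = R0
    · exact Or.inr (by simp [R', hi])
    · exact Or.inl (if_neg hi)
  exact Set.left_notMem_uIoo (outcome_unchanged ▸ outcome_eq_peak ▸ ht)

theorem exists_ne_R0_of_ne_indiffProfile (hR : R ≠ indiffProfile n) : ∃ i, (R i).1 ≠ R0 := by
  contrapose! hR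
  exact funext fun i => Subtype.ext (hR i)

theorem tmin_le_peak {i : Fin n} (hi : (R i).1 ≠ R0) : tmin R ≤ peak (R i).1 := by
  refine csInf_le ⟨0, ?_⟩ ⟨i, hi, rfl⟩
  rintro _ ⟨j, -, rfl⟩
  exact (peak (R j).1).2.1

theorem peak_le_tmax {i : Fin n} (hi : (R i).1 ≠ R0) : peak (R i).1 ≤ tmax R := by
  refine le_csSup ⟨1, ?_⟩ ⟨i, hi, rfl⟩
  rintro _ ⟨j, -, rfl⟩
  exact (peak (R j).1).2.2

theorem EfficientAt.exists_not_P {a : A} (h : EfficientAt R a) (hR : R ≠ indiffProfile n) (b : A) :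
    ∃ i, (R i).1 ≠ R0 ∧ ¬ (R i).1.P b a := by
  obtain ⟨j, hj⟩ := exists_ne_R0_of_ne_indiffProfile hR
  by_contra! hP
  refine h ⟨b, ?_, fun i => ?_, j, hP j hj⟩
  · rintro rfl
    exact (hP j hj).2 (hP j hj).1
  · by_cases hi : (R i).1 = R0
    · rw [hi]
      trivial
    · exact (hP i hi).1

theorem EfficientAt.tmin_le {a : A} (h : EfficientAt R a) (hR : R ≠ indiffProfile n) :
    tmin R ≤ a := by
  by_contra! hlt
  obtain ⟨j, hj⟩ := exists_ne_R0_of_ne_indiffProfile hR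
  let b : A := ⟨tmin R, a.2.1.trans hlt.le, (tmin_le_peak hj).trans (peak (R j).1).2.2⟩
  obtain ⟨i, hi, hP⟩ := h.exists_not_P hR b
  exact hP (isPeak_peak hi b a (Or.inr ⟨hlt, tmin_le_peak hi⟩))

theorem EfficientAt.le_tmax {a : A} (h : EfficientAt R a) (hR : R ≠ indiffProfile n) :
    a ≤ tmax R := by
  by_contra! hlt
  obtain ⟨j, hj⟩ := exists_ne_R0_of_ne_indiffProfile hR
  let b : A := ⟨tmax R, (peak (R j).1).2.1.trans (peak_le_tmax hj), hlt.le.trans a.2.2⟩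
  obtain ⟨i, hi, hP⟩ := h.exists_not_P hR b
  exact hP (isPeak_peak hi b a (Or.inl ⟨peak_le_tmax hi, hlt⟩))

end SocialChoice

theorem stmt_6_general {n : ℕ} {f : (Fin n → S0) → A} (hOnto : Onto f) (hPSP : PairwiseSP f) :
    Efficient f ∧
      ∀ R : Fin n → S0, R ≠ indiffProfile n →
        tmin R ≤ (f R : ℝ) ∧ (f R : ℝ) ≤ tmax R :=
  have hEff := hPSP.efficient hOnto
  ⟨hEff, fun R hR => ⟨(hEff R).tmin_le hR, (hEff R).le_tmax hR⟩⟩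

/-- For n ≥ 3, every onto and pairwise strategy-proof SCF is
efficient; in particular, for every profile R ≠ R^{0N},
f(R) ∈ [τ̲(R), τ̄(R)]. -/
theorem stmt_6 (n : ℕ) (hn : 3 ≤ n) (f : (Fin n → S0) → A)
    (hOnto : Onto f) (hPSP : PairwiseSP f) :
    Efficient f ∧
      ∀ R : Fin n → S0, R ≠ indiffProfile n →
        tmin R ≤ (f R : ℝ) ∧ (f R : ℝ) ≤ tmax R :=
  stmt_6_general hOnto hPSP
end

section
/- Let n ≥ 3 and let f : S₀ⁿ → A be onto and pairwise strategy-proof. Let R̄ ∈ S₀ⁿ be a profile in which every agent has a single-peaked preference, τ(R̄_i) = 0 for all i ∈ {1,…,n−1}, and τ(R̄_n) = 1, and set x = f(R̄). Then for every profile R ∈ S₀ⁿ with R ≠ R^{0N} and τ̲(R) ≤ x ≤ τ̄(R), f(R) = x. -/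
/-!
An indifferent agent may join any single other agent in a deviation, so replacing its report never
benefits anyone. Hence, next to one agent with peak `0` and one with peak `1`, nobody else's report
matters: removing or adding it can move the outcome in neither direction. With a third agent
available, the two extreme agents can be exchanged for others one at a time, so all profiles
containing both extreme peaks share one outcome `x`.

Now let agent `i` have a peak `p ≤ x`. Replacing some other agent's preference by one with peak `1`
can only raise the outcome, and in the resulting profile agent `i` could enforce `x` by reporting
peak `0`; as it does not want to, the outcome was at most `x`. Symmetrically, a peak `p ≥ x`
bounds the outcome from below by `x`.
-/

open Function

namespace Pref

/-- Two preferences are opposed if every move between distinct alternatives strictly hurts one of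
them; the pairs with peaks `0` and `1` are the example of interest. The symmetry of this notion lets
the two ends of the interval be treated at once. -/
def Opposed (r s : Pref) : Prop := ∀ x y : A, x ≠ y → r.P x y ∨ s.P x y

lemma Opposed.symm {r s : Pref} (h : r.Opposed s) : s.Opposed r :=
  fun x y hxy => (h x y hxy).symm

namespace IsPeak

variable {r s : Pref} {p x y : A}

lemma le_of_not_P (hp : r.IsPeak p) (hx : p ≤ x) (h : ¬ r.P x y) : y ≤ x :=
  not_lt.1 fun hxy => h (hp x y (Or.inl ⟨hx, hxy⟩))

lemma ge_of_not_P (hp : r.IsPeak p) (hx : x ≤ p) (h : ¬ r.P x y) : x ≤ y :=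
  not_lt.1 fun hyx => h (hp x y (Or.inr ⟨hyx, hx⟩))

lemma opposed (hr : r.IsPeak zeroA) (hs : s.IsPeak oneA) : r.Opposed s := by
  intro x y hxy
  rcases hxy.lt_or_gt with hlt | hgt
  · exact Or.inl (hr x y (Or.inl ⟨x.2.1, hlt⟩))
  · exact Or.inr (hs x y (Or.inr ⟨hgt, x.2.2⟩))

end IsPeak

end Pref

namespace PairwiseSP

variable {n : ℕ} {f : (Fin n → S0) → A} {R Q : Fin n → S0} {a b c d i : Fin n} {p : A}

lemma not_P_update (hf : PairwiseSP f) (R : Fin n → S0) {i : Fin n} (j : Fin n) {r : S0}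
    (hi : (R i).1.rel (f (update R i r)) (f R)) : ¬ (R j).1.P (f (update R i r)) (f R) := by
  intro hj
  refine hf {i, j} (by simp) Finset.card_le_two ⟨R, update R i r, ?_, ?_, j, by simp, hj⟩
  · intro k hk
    have hki : k ≠ i := by rintro rfl; simp at hk
    exact update_of_ne hki r R
  · intro k hk
    obtain rfl | rfl : k = i ∨ k = j := by simpa using hk
    exacts [hi, hj.1]

lemma not_P_update_self (hf : PairwiseSP f) (R : Fin n → S0) (i : Fin n) (r : S0) :
    ¬ (R i).1.P (f (update R i r)) (f R) :=
  fun h => hf.not_P_update R i h.1 h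

lemma not_P_update_indiff (hf : PairwiseSP f) (R : Fin n → S0) {i j : Fin n} (hji : j ≠ i)
    (r : S0) : ¬ (R j).1.P (f (update R i r)) (f (update R i (indiffProfile n i))) := by
  have h := hf.not_P_update (update R i (indiffProfile n i)) (i := i) j (r := r)
    (by rw [update_self]; trivial)
  rwa [update_idem, update_of_ne hji] at h

lemma update_eq_of_opposed (hf : PairwiseSP f) (hab : (R a).1.Opposed (R b).1)
    (hai : a ≠ i) (hbi : b ≠ i) (r : S0) : f (update R i r) = f R := by
  have eq_indiff (r : S0) : f (update R i r) = f (update R i (indiffProfile n i)) := by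
    by_contra hne
    exact (hab _ _ hne).elim (hf.not_P_update_indiff R hai r) (hf.not_P_update_indiff R hbi r)
  rw [eq_indiff r, ← eq_indiff (R i), update_eq_self]

lemma eq_of_opposed (hf : PairwiseSP f) (hab : (R a).1.Opposed (R b).1)
    (ha : Q a = R a) (hb : Q b = R b) : f Q = f R := by
  have piecewise_eq (s : Finset (Fin n)) (has : a ∉ s) (hbs : b ∉ s) :
      f (s.piecewise Q R) = f R := by
    induction s using Finset.induction_on with
    | empty => rw [Finset.piecewise_empty]
    | insert i s _ ih =>
      obtain ⟨hai, has⟩ : a ≠ i ∧ a ∉ s := by simpa using has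
      obtain ⟨hbi, hbs⟩ : b ≠ i ∧ b ∉ s := by simpa using hbs
      rw [Finset.piecewise_insert, hf.update_eq_of_opposed _ hai hbi, ih has hbs]
      simpa only [Finset.piecewise_eq_of_notMem _ _ _ has,
        Finset.piecewise_eq_of_notMem _ _ _ hbs] using hab
  have hQ : ({a, b}ᶜ : Finset (Fin n)).piecewise Q R = Q := by
    ext1 k
    by_cases hk : k ∈ ({a, b}ᶜ : Finset (Fin n))
    · exact Finset.piecewise_eq_of_mem _ _ _ hk
    · rw [Finset.piecewise_eq_of_notMem _ _ _ hk]
      obtain rfl | rfl : k = a ∨ k = b := by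
        simpa only [Finset.mem_compl, not_not, Finset.mem_insert, Finset.mem_singleton] using hk
      exacts [ha.symm, hb.symm]
  rw [← hQ]
  exact piecewise_eq _ (by simp) (by simp)

lemma eq_of_opposed_common (hf : PairwiseSP f) (hn : 3 ≤ n) (hab : (R a).1.Opposed (R b).1)
    (hcb : (Q c).1.Opposed (Q b).1) (hb : Q b = R b) : f Q = f R := by
  obtain ⟨e, hea, heb⟩ := Fin.exists_ne_and_ne_of_two_lt a b hn
  calc f Q = f (update Q e (Q c)) := by
        refine (hf.eq_of_opposed hcb ?_ (update_of_ne heb.symm _ _)).symm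
        rcases eq_or_ne c e with rfl | hce
        exacts [update_self .., update_of_ne hce _ _]
    _ = f (update R e (Q c)) :=
        hf.eq_of_opposed (a := e) (b := b) (by simpa [heb.symm, ← hb] using hcb)
          (by simp) (by simp [heb.symm, hb])
    _ = f R := hf.eq_of_opposed hab (update_of_ne hea.symm _ _) (update_of_ne heb.symm _ _)

lemma eq_of_isPeak_zeroA_oneA (hf : PairwiseSP f) (hn : 3 ≤ n)
    (ha : (R a).1.IsPeak zeroA) (hb : (R b).1.IsPeak oneA)
    (hc : (Q c).1.IsPeak zeroA) (hd : (Q d).1.IsPeak oneA) : f R = f Q := by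
  obtain ⟨e, heb, hed⟩ := Fin.exists_ne_and_ne_of_two_lt b d hn
  let withLow (t : S0) : Fin n → S0 := update (fun _ => t) e (Q c)
  have low (t : S0) : withLow t e = Q c := update_self ..
  have high (t : S0) {k : Fin n} (hk : e ≠ k) : withLow t k = t := update_of_ne hk.symm _ _
  have opp (t : S0) (ht : t.1.IsPeak oneA) {k : Fin n} (hk : e ≠ k) :
      (withLow t e).1.Opposed (withLow t k).1 := by
    rw [low, high t hk]
    exact hc.opposed ht
  calc f R = f (withLow (R b)) :=
        hf.eq_of_opposed_common hn (opp _ hb heb) (ha.opposed hb) (high _ heb).symm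
    _ = f (withLow (Q d)) :=
        hf.eq_of_opposed_common hn (opp _ hd hed).symm (opp _ hb heb).symm (by rw [low, low])
    _ = f Q := hf.eq_of_opposed_common hn (hc.opposed hd) (opp _ hd hed) (high _ hed)

lemma le_update_of_peak_le (hf : PairwiseSP f) (hp : (R i).1.IsPeak p) {r : S0}
    (h : p ≤ f (update R i r)) : f R ≤ f (update R i r) :=
  hp.le_of_not_P h (hf.not_P_update_self R i r)

lemma update_le_of_le_peak (hf : PairwiseSP f) (hp : (R i).1.IsPeak p) {r : S0}
    (h : f (update R i r) ≤ p) : f (update R i r) ≤ f R :=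
  hp.ge_of_not_P h (hf.not_P_update_self R i r)

lemma update_le_of_isPeak_zeroA (hf : PairwiseSP f) (R : Fin n → S0) (i : Fin n) {r : S0}
    (hr : r.1.IsPeak zeroA) : f (update R i r) ≤ f R := by
  simpa using hf.le_update_of_peak_le (R := update R i r) (i := i) (r := R i)
    (by simpa using hr) (f _).2.1

lemma le_update_of_isPeak_oneA (hf : PairwiseSP f) (R : Fin n → S0) (i : Fin n) {r : S0}
    (hr : r.1.IsPeak oneA) : f R ≤ f (update R i r) := by
  simpa using hf.update_le_of_le_peak (R := update R i r) (i := i) (r := R i)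
    (by simpa using hr) (f _).2.2

lemma le_of_peak_le (hf : PairwiseSP f) (hn : 3 ≤ n) (hc : (Q c).1.IsPeak zeroA)
    (hd : (Q d).1.IsPeak oneA) (hp : (R i).1.IsPeak p) (hpQ : p ≤ f Q) : f R ≤ f Q := by
  obtain ⟨e, hei, -⟩ := Fin.exists_ne_and_ne_of_two_lt i i hn
  have polar : f (update (update R e (Q d)) i (Q c)) = f Q :=
    hf.eq_of_isPeak_zeroA_oneA hn (a := i) (b := e) (by simpa using hc) (by simpa [hei] using hd)
      hc hd
  calc f R ≤ f (update R e (Q d)) := hf.le_update_of_isPeak_oneA R e hd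
    _ ≤ f (update (update R e (Q d)) i (Q c)) :=
        hf.le_update_of_peak_le (by simpa [hei.symm] using hp) (hpQ.trans_eq polar.symm)
    _ = f Q := polar

lemma ge_of_le_peak (hf : PairwiseSP f) (hn : 3 ≤ n) (hc : (Q c).1.IsPeak zeroA)
    (hd : (Q d).1.IsPeak oneA) (hp : (R i).1.IsPeak p) (hpQ : f Q ≤ p) : f Q ≤ f R := by
  obtain ⟨e, hei, -⟩ := Fin.exists_ne_and_ne_of_two_lt i i hn
  have polar : f (update (update R e (Q c)) i (Q d)) = f Q :=
    hf.eq_of_isPeak_zeroA_oneA hn (a := e) (b := i) (by simpa [hei] using hc) (by simpa using hd)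
      hc hd
  calc f Q = f (update (update R e (Q c)) i (Q d)) := polar.symm
    _ ≤ f (update R e (Q c)) :=
        hf.update_le_of_le_peak (by simpa [hei.symm] using hp) (polar.trans_le hpQ)
    _ ≤ f R := hf.update_le_of_isPeak_zeroA R e hc

end PairwiseSP

section Peaks

variable {n : ℕ} {R : Fin n → S0}

lemma isPeak_peak_s10 {r : S0} (hr : r.1 ≠ R0) : r.1.IsPeak (peak r.1) := by
  have hs : SinglePeaked r.1 := r.2.resolve_right hr
  rw [peak, dif_pos hs]
  exact hs.choose_spec

/-- The set `τ(R)` of peaks of the agents that are not completely indifferent, as real numbers;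
`tmin R` and `tmax R` are its infimum and supremum. -/
def peakSet (R : Fin n → S0) : Set ℝ :=
  {x : ℝ | ∃ i : Fin n, (R i).1 ≠ R0 ∧ (peak (R i).1 : ℝ) = x}

lemma finite_peakSet (R : Fin n → S0) : (peakSet R).Finite :=
  (Set.finite_range fun i => (peak (R i).1 : ℝ)).subset fun _ ⟨i, _, hi⟩ => ⟨i, hi⟩

lemma nonempty_peakSet (hR : R ≠ indiffProfile n) : (peakSet R).Nonempty := by
  obtain ⟨i, hi⟩ := Function.ne_iff.1 hR
  exact ⟨_, i, fun h => hi (Subtype.ext h), rfl⟩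

lemma exists_isPeak_of_mem_peakSet {x : ℝ} (hx : x ∈ peakSet R) :
    ∃ i p, (R i).1.IsPeak p ∧ (p : ℝ) = x := by
  obtain ⟨i, hi, hix⟩ := hx
  exact ⟨i, peak (R i).1, isPeak_peak_s10 hi, hix⟩

lemma exists_isPeak_eq_tmin (hR : R ≠ indiffProfile n) :
    ∃ i p, (R i).1.IsPeak p ∧ (p : ℝ) = tmin R :=
  exists_isPeak_of_mem_peakSet ((nonempty_peakSet hR).csInf_mem (finite_peakSet R))

lemma exists_isPeak_eq_tmax (hR : R ≠ indiffProfile n) :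
    ∃ i p, (R i).1.IsPeak p ∧ (p : ℝ) = tmax R :=
  exists_isPeak_of_mem_peakSet ((nonempty_peakSet hR).csSup_mem (finite_peakSet R))

end Peaks

theorem stmt_10_general {n : ℕ} (hn : 3 ≤ n) {f : (Fin n → S0) → A} (hf : PairwiseSP f)
    {Q : Fin n → S0} {a b : Fin n} (ha : (Q a).1.IsPeak zeroA) (hb : (Q b).1.IsPeak oneA)
    {R : Fin n → S0} (hR : R ≠ indiffProfile n)
    (hx : tmin R ≤ (f Q : ℝ) ∧ (f Q : ℝ) ≤ tmax R) : f R = f Q := by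
  obtain ⟨i, p, hp, hp_min⟩ := exists_isPeak_eq_tmin hR
  obtain ⟨j, q, hq, hq_max⟩ := exists_isPeak_eq_tmax hR
  have hpQ : p ≤ f Q := Subtype.coe_le_coe.1 (hp_min.trans_le hx.1)
  have hQq : f Q ≤ q := Subtype.coe_le_coe.1 (hx.2.trans_eq hq_max.symm)
  exact le_antisymm (hf.le_of_peak_le hn ha hb hp hpQ) (hf.ge_of_le_peak hn ha hb hq hQq)

/-- With x the value selected at a profile where agents
1,…,n−1 have peak 0 and agent n has peak 1, every profile R ≠ R^{0N} with
τ̲(R) ≤ x ≤ τ̄(R) gets outcome x. -/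
theorem stmt_10 (n : ℕ) (hn : 3 ≤ n) (f : (Fin n → S0) → A)
    (hOnto : Onto f) (hPSP : PairwiseSP f)
    (Rbar : Fin n → S0)
    (h0 : ∀ i : Fin n, (i : ℕ) < n - 1 → (Rbar i).1.IsPeak zeroA)
    (h1 : (Rbar ⟨n - 1, by omega⟩).1.IsPeak oneA)
    (R : Fin n → S0) (hR : R ≠ indiffProfile n)
    (hx : tmin R ≤ (f Rbar : ℝ) ∧ (f Rbar : ℝ) ≤ tmax R) :
    f R = f Rbar := by
  exact stmt_10_general hn hPSP (h0 ⟨0, by omega⟩ (show 0 < n - 1 by omega)) h1 hR hx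
end
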